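/- arXiv:math-ph/0504050 — 3 statements merged into one kernel-verified Lean document; each statement's English description precedes it below -/
import Mathlib

section
/- Let x1, x2 be nonzero complex numbers, and write x̄1 = conj(x1), x̄2 = conj(x2). Suppose S1(x1,x2) = 0, S2(x1,x2) = 0 and S3(x1,x2) = 0, where S1, S2, S3 are the polynomials defined in the context. Then 6·x1 + 11 = 0 and 324·x2·x̄2 = 1. (This is the unique solution, equation (5.140) of the paper, found by a Gröbner-basis computation applied to the side relations (5.140a)–(5.142a).) -/
open ComplexConjugate

/-!
Treat the conjugates `a'` of `a = x1` and `b'` of `b = x2` as independent variables, and write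
`u = 6a + 11`, `v = 10a + 19`, `R = 35a + 66`, `T = 25a + 2`, with a prime for the conjugate forms.
The first relation is `v v' = 144 b b'`, so `v` and `v'` do not vanish. Modulo it, the other two are
quadratics in `b'` with the same leading coefficient, and their difference is a multiple of
`u v (R v u' + 12 u T' b')`. If `u = 0`, the second relation forces `u' = 0`, and the first one then
gives the value of `b b'`.

Suppose `u` and `u'` are nonzero. Then `12 u T' b' = -R v u'`. Multiplying this by its conjugate
gives `R R' = T T'`, and eliminating `b'` from the second relation gives a relation `E(a, a') = 0`
of bidegree `(2, 2)`. Put `s = a + a'` and `p = a a'`. Both `R R' - T T'` and the quotient of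
`E(a, a') - E(a', a)` by `a - a'` are polynomials of degree one in `s` and `p`. Hence either
`a = a'`, or `s` and `p` are explicit rational numbers; the first case contradicts `E(a, a) = 0`,
the second `E(a, a') + E(a', a) = 0`.
-/

section CommRing

variable {A B : Type*} [CommRing A] [CommRing B]

/-- The polynomial `S1`, regrouped, for `a = x1` and `b = x2`, with independent variables `a'`
and `b'` in place of their conjugates. -/
def sidePoly₁ (a a' b b' : A) : A :=
  (10 * a + 19) * (10 * a' + 19) - 144 * b * b'

/-- The polynomial `S2`, regrouped, in the variables of `sidePoly₁`. -/
def sidePoly₂ (a a' b b' : A) : A :=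
  -(992 * a ^ 2 + 2916 * a + 1969) * (10 * a + 19) * ((10 * a + 19) * (a' + 2) - 36 * b * b')
    - 12 * (6 * a + 11) * (10 * a + 19) * (139 * a * a' + 626 * a + 408 * a' + 1174) * b'
    + 144 * (6 * a + 11) * (2 * (6 * a + 11) * (28 * a' + 1) + 3 * (326 * a + 605) * b) * b' ^ 2

/-- The polynomial `S3`, regrouped, in the variables of `sidePoly₁`. -/
def sidePoly₃ (a a' b b' : A) : A :=
  (898 * a ^ 2 + 4113 * a + 4565) * (10 * a + 19) * ((10 * a + 19) * (a' + 2) - 36 * b * b')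
    - 3 * (6 * a + 11) * (10 * a + 19) * (1906 * a * a' + 2612 * a + 4107 * a' + 4894) * b'
    + 144 * (6 * a + 11) * (2 * (6 * a + 11) * (28 * a' + 1) + 3 * (326 * a + 605) * b) * b' ^ 2

lemma map_sidePoly₂ (f : A →+* B) (a a' b b' : A) :
    f (sidePoly₂ a a' b b') = sidePoly₂ (f a) (f a') (f b) (f b') := by
  simp [sidePoly₂, map_ofNat]

lemma map_sidePoly₃ (f : A →+* B) (a a' b b' : A) :
    f (sidePoly₃ a a' b b') = sidePoly₃ (f a) (f a') (f b) (f b') := by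
  simp [sidePoly₃, map_ofNat]

/-- The side relations `S1 = S2 = S3 = 0` together with their formal conjugates, which exchange `a`
with `a'` and `b` with `b'`. The relation `S1 = 0` is its own conjugate. -/
structure SideRelations (a a' b b' : A) : Prop where
  first : sidePoly₁ a a' b b' = 0
  second : sidePoly₂ a a' b b' = 0
  third : sidePoly₃ a a' b b' = 0
  second_conj : sidePoly₂ a' a b' b = 0
  third_conj : sidePoly₃ a' a b' b = 0

/-- The polynomial `E(a, a')` obtained by eliminating `b` and `b'` from the side relations:
modulo `S1`, it satisfies `4 T'² S2 = v² u' E` whenever `12 u T' b' = -R v u'`. -/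
def eliminant (a a' : A) : A :=
  (992 * a ^ 2 + 2916 * a + 1969) * (25 * a' + 2) ^ 2
    - (2704 * a * a' + 3690 * a + 4418 * a' + 6799) * (25 * a' + 2) * (35 * a + 66)
    + 8 * (28 * a' + 1) * (6 * a' + 11) * (35 * a + 66) ^ 2

lemma eliminant_sub_swap (a a' : A) :
    eliminant a a' - eliminant a' a =
      (a - a') * (53940 * (a * a') + 58079 * (a + a') + 117568) := by
  unfold eliminant
  ring

lemma eliminant_add_swap (a a' : A) :
    eliminant a a' + eliminant a' a =
      -(199200 * (a * a') ^ 2 + 537200 * (a * a') * (a + a') + 351143 * (a + a') ^ 2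
        + 911260 * (a * a') + 1207140 * (a + a') + 1012528) := by
  unfold eliminant
  ring

namespace SideRelations

variable {a a' b b' : A}

lemma symm (h : SideRelations a a' b b') : SideRelations a' a b' b where
  first := by
    rw [← h.first]
    unfold sidePoly₁
    ring
  second := h.second_conj
  third := h.third_conj
  second_conj := h.second
  third_conj := h.third

lemma of_conj [StarRing A] (h₁ : sidePoly₁ a (conj a) b (conj b) = 0)
    (h₂ : sidePoly₂ a (conj a) b (conj b) = 0) (h₃ : sidePoly₃ a (conj a) b (conj b) = 0) :
    SideRelations a (conj a) b (conj b) where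
  first := h₁
  second := h₂
  third := h₃
  second_conj := by simpa [map_sidePoly₂] using congrArg conj h₂
  third_conj := by simpa [map_sidePoly₃] using congrArg conj h₃

lemma mul_eq (h : SideRelations a a' b b') :
    (10 * a + 19) * (10 * a' + 19) = 144 * b * b' :=
  sub_eq_zero.mp h.first

lemma second_reduced (h : SideRelations a a' b b') :
    (992 * a ^ 2 + 2916 * a + 1969) * (10 * a + 19) ^ 2 * (6 * a' + 11)
      + 12 * (6 * a + 11) * (10 * a + 19) * (2704 * a * a' + 3690 * a + 4418 * a' + 6799) * b'
      + 1152 * (6 * a + 11) ^ 2 * (28 * a' + 1) * b' ^ 2 = 0 := by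
  have h₂ := h.second
  unfold sidePoly₂ at h₂
  linear_combination 4 * h₂ + ((992 * a ^ 2 + 2916 * a + 1969) * (10 * a + 19)
    + 12 * (6 * a + 11) * (326 * a + 605) * b') * h.mul_eq

end SideRelations

end CommRing

section Field

variable {K : Type*} [Field K] [CharZero K] {a a' b b' : K}

lemma eliminant_self_ne_zero (hcircle : (35 * a + 66) ^ 2 = (25 * a + 2) ^ 2) :
    eliminant a a ≠ 0 := by
  rcases sq_eq_sq_iff_eq_or_eq_neg.mp hcircle with h | h
  · have ha : a = -32 / 5 := by linear_combination (1 / 10) * h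
    norm_num [eliminant, ha]
  · have ha : a = -17 / 15 := by linear_combination (1 / 60) * h
    norm_num [eliminant, ha]

lemma eliminant_swap_ne_zero
    (hcircle : (35 * a + 66) * (35 * a' + 66) = (25 * a + 2) * (25 * a' + 2))
    (h : eliminant a a' = 0) : eliminant a' a ≠ 0 := by
  intro h'
  obtain rfl | hne := eq_or_ne a a'
  · exact eliminant_self_ne_zero (by linear_combination hcircle) h
  have hlin : 53940 * (a * a') + 58079 * (a + a') + 117568 = 0 := by
    refine (mul_eq_zero.mp ?_).resolve_left (sub_ne_zero.mpr hne)
    rw [← eliminant_sub_swap, h, h', sub_zero]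
  have hsum : a + a' = -456128 / 241825 := by
    linear_combination (899 / 1450950) * hcircle - (1 / 145095) * hlin
  have hprod : a * a' = -179776 / 1209125 := by
    linear_combination (1 / 600) * hcircle - (113 / 30) * hsum
  have hadd := eliminant_add_swap a a'
  rw [h, h', hsum, hprod] at hadd
  norm_num at hadd

namespace SideRelations

lemma ten_mul_add_ne_zero (h : SideRelations a a' b b') (hb : b ≠ 0) (hb' : b' ≠ 0) :
    10 * a + 19 ≠ 0 := by
  refine left_ne_zero_of_mul (b := 10 * a' + 19) ?_
  rw [h.mul_eq]
  exact mul_ne_zero (mul_ne_zero (by norm_num) hb) hb'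

lemma six_mul_conj_add_eq_zero (h : SideRelations a a' b b') (hv : 10 * a + 19 ≠ 0)
    (hu : 6 * a + 11 = 0) : 6 * a' + 11 = 0 := by
  have ha : a = -11 / 6 := by linear_combination (1 / 6) * hu
  have hQ : 992 * a ^ 2 + 2916 * a + 1969 ≠ 0 := by norm_num [ha]
  refine (mul_eq_zero.mp ?_).resolve_left (mul_ne_zero hQ (pow_ne_zero 2 hv))
  simpa [hu] using h.second_reduced

lemma linear_relation (h : SideRelations a a' b b') (hu : 6 * a + 11 ≠ 0)
    (hv : 10 * a + 19 ≠ 0) :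
    12 * (6 * a + 11) * (25 * a' + 2) * b'
      = -((35 * a + 66) * (10 * a + 19) * (6 * a' + 11)) := by
  have h₂ := h.second
  have h₃ := h.third
  unfold sidePoly₂ at h₂
  unfold sidePoly₃ at h₃
  refine mul_left_cancel₀ (mul_ne_zero hu hv) ?_
  linear_combination (4 / 9) * (h₂ - h₃)
    + (6 * a + 11) * (10 * a + 19) * (35 * a + 66) * h.mul_eq

lemma circle_relation (h : SideRelations a a' b b') (hu : 6 * a + 11 ≠ 0)
    (hu' : 6 * a' + 11 ≠ 0) (hv : 10 * a + 19 ≠ 0) (hv' : 10 * a' + 19 ≠ 0) :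
    (35 * a + 66) * (35 * a' + 66) = (25 * a + 2) * (25 * a' + 2) := by
  have hprod := congrArg₂ (· * ·) (h.linear_relation hu hv) (h.symm.linear_relation hu' hv')
  refine mul_left_cancel₀ (mul_ne_zero (mul_ne_zero hu hu') (mul_ne_zero hv hv')) ?_
  linear_combination -hprod
    - (6 * a + 11) * (6 * a' + 11) * (25 * a + 2) * (25 * a' + 2) * h.mul_eq

lemma eliminant_eq_zero (h : SideRelations a a' b b') (hu : 6 * a + 11 ≠ 0)
    (hu' : 6 * a' + 11 ≠ 0) (hv : 10 * a + 19 ≠ 0) : eliminant a a' = 0 := by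
  refine (mul_eq_zero.mp ?_).resolve_left (mul_ne_zero (pow_ne_zero 2 hv) hu')
  unfold eliminant
  linear_combination (25 * a' + 2) ^ 2 * h.second_reduced
    - ((10 * a + 19) * (2704 * a * a' + 3690 * a + 4418 * a' + 6799) * (25 * a' + 2)
      + 8 * (28 * a' + 1) * (12 * (6 * a + 11) * (25 * a' + 2) * b'
        - (35 * a + 66) * (10 * a + 19) * (6 * a' + 11))) * h.linear_relation hu hv

lemma six_mul_add_eq_zero (h : SideRelations a a' b b') (hv : 10 * a + 19 ≠ 0)
    (hv' : 10 * a' + 19 ≠ 0) : 6 * a + 11 = 0 := by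
  by_contra hu
  have hu' : 6 * a' + 11 ≠ 0 := mt (h.symm.six_mul_conj_add_eq_zero hv') hu
  exact eliminant_swap_ne_zero (h.circle_relation hu hu' hv hv')
    (h.eliminant_eq_zero hu hu' hv) (h.symm.eliminant_eq_zero hu' hu hv')

end SideRelations

theorem groebner_solution_general (h : SideRelations a a' b b') (hb : b ≠ 0) (hb' : b' ≠ 0) :
    6 * a + 11 = 0 ∧ 6 * a' + 11 = 0 ∧ 324 * b * b' = 1 := by
  have hv := h.ten_mul_add_ne_zero hb hb'
  have hv' := h.symm.ten_mul_add_ne_zero hb' hb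
  have hu := h.six_mul_add_eq_zero hv hv'
  have hu' := h.symm.six_mul_add_eq_zero hv' hv
  refine ⟨hu, hu', ?_⟩
  linear_combination (-9 / 4) * h.mul_eq + (15 / 4) * (10 * a' + 19) * hu + (5 / 2) * hu'

end Field

/-- Equation (5.140): the unique solution with `x1 ≠ 0`, `x2 ≠ 0` of the
polynomial system `S1 = S2 = S3 = 0` (eqs. (5.140a)–(5.142a)) satisfies
`6·x1 + 11 = 0` and `324·x2·conj x2 = 1`. -/
theorem groebner_solution (x1 x2 : ℂ) (hx1 : x1 ≠ 0) (hx2 : x2 ≠ 0)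
    (hS1 : 361 + 190 * x1 + 190 * conj x1 + 100 * x1 * conj x1
      - 144 * x2 * conj x2 = 0)
    (hS2 : -1663092 * x1 ^ 2 * conj x1 - 99200 * conj x1 * x1 ^ 4
      - 2527968 * x1 ^ 2 * conj x2 + 975744 * conj x2 ^ 2 * conj x1
      - 1023264 * conj x2 * conj x1 + 2874960 * x2 * conj x2 ^ 2
      - 4725720 * x1 * conj x2 - 198400 * x1 ^ 4
      - 3326184 * x1 ^ 2 - 1337120 * x1 ^ 3 + 34848 * conj x2 ^ 2
      - 3601792 * x1 - 710809 * conj x1 - 2944392 * conj x2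
      + 844992 * conj x2 ^ 2 * x1 ^ 2 * x2 + 1064448 * conj x2 ^ 2 * conj x1 * x1
      + 290304 * conj x2 ^ 2 * conj x1 * x1 ^ 2 - 100080 * conj x2 * conj x1 * x1 ^ 3
      + 1728288 * conj x2 * x1 ^ 2 * x2 - 667392 * x1 ^ 2 * conj x2 * conj x1
      + 2703384 * conj x2 * x1 * x2 + 1346796 * x2 * conj x2
      - 668560 * x1 ^ 3 * conj x1 - 450720 * x1 ^ 3 * conj x2
      - 1800896 * x1 * conj x1 + 10368 * x1 ^ 2 * conj x2 ^ 2
      + 38016 * x1 * conj x2 ^ 2 - 1445316 * x1 * conj x2 * conj x1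
      + 357120 * conj x2 * x1 ^ 3 * x2 + 3117312 * conj x2 ^ 2 * x1 * x2
      - 1421618 = 0)
    (hS3 : 2343618 * x1 ^ 2 * conj x1 + 89800 * conj x1 * x1 ^ 4
      - 2636184 * x1 ^ 2 * conj x2 + 975744 * conj x2 ^ 2 * conj x1
      - 2575089 * conj x2 * conj x1 + 2874960 * x2 * conj x2 ^ 2
      + 3295930 - 4926492 * x1 * conj x2 + 179600 * x1 ^ 4
      + 4687236 * x1 ^ 2 + 1505080 * x1 ^ 3 + 34848 * conj x2 ^ 2
      + 6438986 * x1 + 1647965 * conj x1 - 3068538 * conj x2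
      + 844992 * conj x2 ^ 2 * x1 ^ 2 * x2 + 1064448 * conj x2 ^ 2 * conj x1 * x1
      + 290304 * conj x2 ^ 2 * conj x1 * x1 ^ 2 - 343080 * conj x2 * conj x1 * x1 ^ 3
      - 2094912 * conj x2 * x1 ^ 2 * x2 - 2020092 * x1 ^ 2 * conj x2 * conj x1
      - 4456692 * conj x2 * x1 * x2 - 3122460 * x2 * conj x2
      + 752540 * x1 ^ 3 * conj x1 - 470160 * x1 ^ 3 * conj x2
      + 3219493 * x1 * conj x1 + 10368 * x1 ^ 2 * conj x2 ^ 2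
      + 38016 * x1 * conj x2 ^ 2 - 3954966 * x1 * conj x2 * conj x1
      - 323280 * conj x2 * x1 ^ 3 * x2 + 3117312 * conj x2 ^ 2 * x1 * x2 = 0) :
    6 * x1 + 11 = 0 ∧ 324 * x2 * conj x2 = 1 := by
  have h : SideRelations x1 (conj x1) x2 (conj x2) :=
    .of_conj (by unfold sidePoly₁; linear_combination hS1)
      (by unfold sidePoly₂; linear_combination hS2) (by unfold sidePoly₃; linear_combination hS3)
  have hsol := groebner_solution_general h hx2 ((map_ne_zero _).mpr hx2)
  exact ⟨hsol.1, hsol.2.2⟩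
end

section
/- Let x1, x2 be complex numbers, and write x̄1 = conj(x1), x̄2 = conj(x2). Suppose that S1(x1,x2) = 0, that 820·x1² + 1508·x1 + 5448·x̄2·x1 − 95 + 10236·x̄2 = 0, and that 2680·x1³ + 1340·x1³·x̄1 − 1908·x̄2·x̄1·x1² + 7876·x1²·x̄1 − 360·x̄2·x1² + 15752·x1² − 4824·x̄2·x2·x1² + 30814·x1 − 1344·x̄2·x1 + 15407·x1·x̄1 − 19188·x̄2·x2·x1 − 7296·x̄2·x̄1·x1 + 20064 + 10032·x̄1 − 19008·x̄2·x2 − 6963·x̄2·x̄1 − 1254·x̄2 = 0. Then x2 = 0. (This is the conclusion of case (i), d1 = 0, of the proof of the Main Theorem, equations (den4.1) and (num4.1) of the paper.) -/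
open ComplexConjugate

/-!
Write `x`, `z` for `x1`, `x2` and replace their conjugates by independent unknowns `y`, `w`, so that
conjugating an equation swaps `x ↔ y` and `z ↔ w`. The first two equations read
`(10x + 19)(10y + 19) = 144zw` and `(10x + 19)(82x - 5) = -12(454x + 853)w`. If `zw ≠ 0`, then
multiplying the second by its conjugate eliminates `z` and `w`, leaving the circle
`(454x + 853)(454y + 853) = (82x - 5)(82y - 5)`. The third equation, once the first is used to
remove `zw`, is linear in `w`; multiplied by `z` it becomes divisible by `10x + 19`, and the
conjugate of the second equation then removes `z`. What is left is a relation of degree two in `x`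
and in `y`.

This relation, its mirror image under `x ↔ y` and the circle have no common zero. On the diagonal
the circle has two rational points, which violate the relation. Off the diagonal, the
antisymmetric part of the relation divided by `x - y` and the circle are both linear in `x + y` and
`xy`; they determine these two values, which violate the symmetric part.
-/

section Polynomials

variable {R : Type*} [CommRing R]

/-- The form `S1`, with `y` and `w` in place of the conjugates of `x` and `z`. -/
def s1Poly (x y z w : R) : R :=
  361 + 190 * x + 190 * y + 100 * x * y - 144 * z * w

/-- The left-hand side of (den4.1), with `w` in place of `conj x2`. -/
def denPoly (x w : R) : R :=
  820 * x ^ 2 + 1508 * x + 5448 * w * x - 95 + 10236 * w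

/-- The left-hand side of (num4.1), with `y` and `w` in place of the conjugates of `x` and `z`. -/
def numPoly (x y z w : R) : R :=
  2680 * x ^ 3 + 1340 * x ^ 3 * y - 1908 * w * y * x ^ 2 + 7876 * x ^ 2 * y
    - 360 * w * x ^ 2 + 15752 * x ^ 2 - 4824 * w * z * x ^ 2 + 30814 * x
    - 1344 * w * x + 15407 * x * y - 19188 * w * z * x - 7296 * w * y * x
    + 20064 + 10032 * y - 19008 * w * z - 6963 * w * y - 1254 * w

/-- The eliminant of `z` and `w` from `s1Poly x y z w`, `numPoly x y z w` and `denPoly y z`, after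
removal of the factor `(10 * x + 19) * (10 * y + 19)`. -/
def elimPoly (x y : R) : R :=
  (134 * x ^ 2 + 533 * x + 528) * (6 * y + 11) * (82 * y - 5)
    - (454 * y + 853) * (2 * (10 * x + 19) * (6 * x + 11) + (636 * x ^ 2 + 2432 * x + 2321) * y)

lemma map_denPoly {S : Type*} [CommRing S] (f : R →+* S) (x w : R) :
    f (denPoly x w) = denPoly (f x) (f w) := by
  simp [denPoly, map_ofNat]

lemma map_numPoly {S : Type*} [CommRing S] (f : R →+* S) (x y z w : R) :
    f (numPoly x y z w) = numPoly (f x) (f y) (f z) (f w) := by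
  simp [numPoly, map_ofNat]

lemma s1Poly_eq (x y z w : R) :
    s1Poly x y z w = (10 * x + 19) * (10 * y + 19) - 144 * (z * w) := by
  unfold s1Poly
  ring

lemma s1Poly_swap (x y z w : R) : s1Poly y x w z = s1Poly x y z w := by
  unfold s1Poly
  ring

lemma denPoly_eq (x w : R) :
    denPoly x w = (10 * x + 19) * (82 * x - 5) + 12 * (454 * x + 853) * w := by
  unfold denPoly
  ring

lemma numPoly_eq (x y z w : R) :
    numPoly x y z w =
      (134 * x ^ 2 + 533 * x + 528) * ((10 * x + 19) * (y + 2) - 36 * (z * w))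
        - 3 * (2 * (10 * x + 19) * (6 * x + 11) + (636 * x ^ 2 + 2432 * x + 2321) * y) * w := by
  unfold numPoly
  ring

lemma elimPoly_sub_swap (x y : R) :
    elimPoly x y - elimPoly y x =
      6 * (x - y) * (60292 * (x * y) + 114038 * (x + y) + 216285) := by
  unfold elimPoly
  ring

lemma elimPoly_add_swap (x y : R) :
    elimPoly x y + elimPoly y x =
      -4 * (111408 * (x * y) ^ 2 + 330508 * (x * y) * (x + y) + 225922 * (x + y) ^ 2
        + 454712 * (x * y) + 530157 * (x + y) + 192797) := by
  unfold elimPoly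
  ring

end Polynomials

section Elimination

variable {R : Type*} [CommRing R] [NoZeroDivisors R] {x y z w : R}

lemma circle_of_s1Poly_denPoly (hxy : (10 * x + 19) * (10 * y + 19) ≠ 0)
    (hS : s1Poly x y z w = 0) (hd : denPoly x w = 0) (hd' : denPoly y z = 0) :
    (454 * x + 853) * (454 * y + 853) = (82 * x - 5) * (82 * y - 5) := by
  rw [s1Poly_eq] at hS
  rw [denPoly_eq] at hd hd'
  refine mul_left_cancel₀ hxy ?_
  linear_combination (454 * x + 853) * (454 * y + 853) * hS
    + 12 * (454 * y + 853) * z * hd - (10 * x + 19) * (82 * x - 5) * hd'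

lemma elimPoly_eq_zero (hxy : (10 * x + 19) * (10 * y + 19) ≠ 0)
    (hS : s1Poly x y z w = 0) (hn : numPoly x y z w = 0) (hd' : denPoly y z = 0) :
    elimPoly x y = 0 := by
  rw [s1Poly_eq] at hS
  rw [numPoly_eq] at hn
  rw [denPoly_eq] at hd'
  set g := 134 * x ^ 2 + 533 * x + 528 with hg
  set k := 2 * (10 * x + 19) * (6 * x + 11) + (636 * x ^ 2 + 2432 * x + 2321) * y with hk
  have linear_in_w : (10 * x + 19) * g * (6 * y + 11) + 12 * k * w = 0 := by
    linear_combination g * hS - 4 * hn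
  have linear_in_z : (10 * x + 19) * (12 * g * (6 * y + 11) * z + (10 * y + 19) * k) = 0 := by
    linear_combination 12 * z * linear_in_w + k * hS
  refine (mul_eq_zero.mp ?_).resolve_left hxy
  rw [elimPoly, ← hg, ← hk]
  linear_combination (10 * x + 19) * g * (6 * y + 11) * hd' - (454 * y + 853) * linear_in_z

end Elimination

section Inconsistency

variable {K : Type*} [Field K] [CharZero K] {x y : K}

lemma elimPoly_self_ne_zero (hc : (454 * x + 853) ^ 2 = (82 * x - 5) ^ 2) :
    elimPoly x x ≠ 0 := by
  rcases sq_eq_sq_iff_eq_or_eq_neg.mp hc with h | h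
  · have hx : x = -143 / 62 := by linear_combination h / 372
    norm_num [hx, elimPoly]
  · have hx : x = -106 / 67 := by linear_combination h / 536
    norm_num [hx, elimPoly]

lemma eq_of_elimPoly_eq_zero
    (hc : (454 * x + 853) * (454 * y + 853) = (82 * x - 5) * (82 * y - 5))
    (h : elimPoly x y = 0) (h' : elimPoly y x = 0) : x = y := by
  by_contra hne
  have hanti : 60292 * (x * y) + 114038 * (x + y) + 216285 = 0 := by
    refine (mul_eq_zero.mp ?_).resolve_left (mul_ne_zero (by norm_num : (6 : K) ≠ 0)
      (sub_ne_zero.mpr hne))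
    rw [← elimPoly_sub_swap, h, h', sub_zero]
  have hcirc : 8308 * (x * y) + 16153 * (x + y) + 30316 = 0 := by
    linear_combination hc / 24
  have hsum : x + y = -7729123 / 6617243 := by
    linear_combination (60292 * hcirc - 8308 * hanti) / 26468972
  have hprod : x * y = -36475597 / 26468972 := by
    linear_combination (16153 * hanti - 114038 * hcirc) / 26468972
  have hsymm := elimPoly_add_swap x y
  norm_num [h, h', hsum, hprod] at hsymm

lemma mul_eq_zero_of_s1Poly_denPoly_numPoly {z w : K} (hS : s1Poly x y z w = 0)
    (hd : denPoly x w = 0) (hd' : denPoly y z = 0)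
    (hn : numPoly x y z w = 0) (hn' : numPoly y x w z = 0) : z * w = 0 := by
  by_contra hzw
  have hxy : (10 * x + 19) * (10 * y + 19) ≠ 0 := by
    rw [sub_eq_zero.mp ((s1Poly_eq x y z w).symm.trans hS)]
    exact mul_ne_zero (by norm_num) hzw
  have hc := circle_of_s1Poly_denPoly hxy hS hd hd'
  have h := elimPoly_eq_zero hxy hS hn hd'
  have h' : elimPoly y x = 0 :=
    elimPoly_eq_zero (by rwa [mul_comm]) ((s1Poly_swap x y z w).trans hS) hn' hd
  obtain rfl := eq_of_elimPoly_eq_zero hc h h'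
  exact elimPoly_self_ne_zero (by simpa only [sq] using hc) h

end Inconsistency

theorem case_d1_zero_general {K : Type*} [Field K] [CharZero K] [StarRing K] (x1 x2 : K)
    (hS1 : s1Poly x1 (conj x1) x2 (conj x2) = 0) (hden : denPoly x1 (conj x2) = 0)
    (hnum : numPoly x1 (conj x1) x2 (conj x2) = 0) : x2 = 0 := by
  have hden' : denPoly (conj x1) x2 = 0 := by
    simpa [hden] using (map_denPoly conj x1 (conj x2)).symm
  have hnum' : numPoly (conj x1) x1 (conj x2) x2 = 0 := by
    simpa [hnum] using (map_numPoly conj x1 (conj x1) x2 (conj x2)).symm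
  simpa using mul_eq_zero_of_s1Poly_denPoly_numPoly hS1 hden hden' hnum hnum'

/-- Case (i), `d1 = 0`, of the proof of the Main Theorem: equations
(den4.1) and (num4.1) together with `S1 = 0` force `x2 = 0`. -/
theorem case_d1_zero (x1 x2 : ℂ)
    (hS1 : 361 + 190 * x1 + 190 * conj x1 + 100 * x1 * conj x1
      - 144 * x2 * conj x2 = 0)
    (hden : 820 * x1 ^ 2 + 1508 * x1 + 5448 * conj x2 * x1 - 95
      + 10236 * conj x2 = 0)
    (hnum : 2680 * x1 ^ 3 + 1340 * x1 ^ 3 * conj x1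
      - 1908 * conj x2 * conj x1 * x1 ^ 2 + 7876 * x1 ^ 2 * conj x1
      - 360 * conj x2 * x1 ^ 2 + 15752 * x1 ^ 2
      - 4824 * conj x2 * x2 * x1 ^ 2 + 30814 * x1
      - 1344 * conj x2 * x1 + 15407 * x1 * conj x1
      - 19188 * conj x2 * x2 * x1 - 7296 * conj x2 * conj x1 * x1
      + 20064 + 10032 * conj x1 - 19008 * conj x2 * x2
      - 6963 * conj x2 * conj x1 - 1254 * conj x2 = 0) :
    x2 = 0 :=
  case_d1_zero_general x1 x2 hS1 hden hnum
end

section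
/- Let x1, x2 be complex numbers, and write x̄1 = conj(x1), x̄2 = conj(x2). Suppose that S1(x1,x2) = 0, that 230·x1 + 437 − 372·x̄2 = 0, and that 350·x1²·x̄1 + 700·x1² + 1325·x1·x̄1 − 36·x̄2·x1 + 2650·x1 + 2508 − 450·x̄2·x̄1·x1 − 1260·x̄2·x2·x1 − 825·x̄2·x̄1 − 66·x̄2 − 2376·x̄2·x2 + 1254·x̄1 = 0. Then x2 = 0. (This is the conclusion of case (ii), d2 = 0, of the proof of the Main Theorem, equations (den4.2) and (num4.2) of the paper.) -/
open ComplexConjugate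

/-!
With `u = 10 * x1 + 19` and `w = 12 * conj x2`, the equation `S1 = 0` says `‖u‖ = ‖w‖`, while
(den4.2) says `23 * u = 31 * w`. Since `23 ≠ 31`, both vanish.
-/

theorem norm_eq_norm_of_mul_star_eq_mul_star {A : Type*} [NonUnitalNormedRing A] [StarRing A]
    [CStarRing A] {a b : A} (h : a * star a = b * star b) : ‖a‖ = ‖b‖ := by
  rw [← mul_self_inj (norm_nonneg a) (norm_nonneg b), ← CStarRing.norm_self_mul_star,
    ← CStarRing.norm_self_mul_star, h]

theorem eq_zero_of_smul_eq_smul_of_norm_eq {R E : Type*} [Norm R]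
    [NormedAddCommGroup E] [SMul R E] [NormSMulClass R E] {r s : R} {u w : E}
    (hrs : ‖r‖ ≠ ‖s‖) (huw : ‖u‖ = ‖w‖) (h : r • u = s • w) : w = 0 := by
  have hnorm : ‖r‖ * ‖w‖ = ‖s‖ * ‖w‖ := by
    rw [← norm_smul s, ← h, norm_smul, huw]
  exact norm_eq_zero.mp <| (mul_eq_mul_right_iff.mp hnorm).resolve_left hrs

theorem case_d2_zero_general {𝕜 : Type*} [RCLike 𝕜] (x1 x2 : 𝕜)
    (hS1 : 361 + 190 * x1 + 190 * conj x1 + 100 * x1 * conj x1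
      - 144 * x2 * conj x2 = 0)
    (hden : 230 * x1 + 437 - 372 * conj x2 = 0) :
    x2 = 0 := by
  have hnorm : ‖10 * x1 + 19‖ = ‖12 * conj x2‖ := by
    apply norm_eq_norm_of_mul_star_eq_mul_star
    simp only [← starRingEnd_apply, map_add, map_mul, map_ofNat, RCLike.conj_conj]
    linear_combination hS1
  have hsmul : (23 : 𝕜) • (10 * x1 + 19) = (31 : 𝕜) • (12 * conj x2) := by
    simp only [smul_eq_mul]
    linear_combination hden
  have hcoeff : ‖(23 : 𝕜)‖ ≠ ‖(31 : 𝕜)‖ := by norm_num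
  simpa using eq_zero_of_smul_eq_smul_of_norm_eq hcoeff hnorm hsmul

/-- Case (ii), `d2 = 0`, of the proof of the Main Theorem: equations
(den4.2) and (num4.2) together with `S1 = 0` force `x2 = 0`. -/
theorem case_d2_zero (x1 x2 : ℂ)
    (hS1 : 361 + 190 * x1 + 190 * conj x1 + 100 * x1 * conj x1
      - 144 * x2 * conj x2 = 0)
    (hden : 230 * x1 + 437 - 372 * conj x2 = 0)
    (hnum : 350 * x1 ^ 2 * conj x1 + 700 * x1 ^ 2 + 1325 * x1 * conj x1
      - 36 * conj x2 * x1 + 2650 * x1 + 2508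
      - 450 * conj x2 * conj x1 * x1 - 1260 * conj x2 * x2 * x1
      - 825 * conj x2 * conj x1 - 66 * conj x2 - 2376 * conj x2 * x2
      + 1254 * conj x1 = 0) :
    x2 = 0 :=
  case_d2_zero_general x1 x2 hS1 hden
end
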